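/- arXiv:gr-qc/0205012 — 2 statements merged into one kernel-verified Lean document; each statement's English description precedes it below -/
import Mathlib

section
/- Let ω be a constant invertible symmetric n×n real matrix with inverse entries ω^{kl}, let α, β be C^∞ solutions of the flat c-system ∂_i∂_j u = ∂_iu ∂_ju − ½ (Σ_{k,l} ω^{kl} ∂_ku ∂_lu) ω_{ij} on an open set U ∋ x₀. If α(x₀) = β(x₀) and ∂_iα(x₀) = ∂_iβ(x₀) for all i, then all higher derivatives agree at x₀: for every m ≥ 0, the m-th iterated (Fréchet) derivative of α at x₀ equals that of β at x₀. -/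
open Matrix

/-- Partial derivative `∂ᵢ f (x)` of a scalar function on `ℝⁿ`. -/
noncomputable def pd {n : ℕ} (f : (Fin n → ℝ) → ℝ) (i : Fin n) (x : Fin n → ℝ) : ℝ :=
  fderiv ℝ f x (Pi.single i 1)

open Filter Topology

/-!
The `m`-jet of `y ↦ Q (y, f y)` at `x` is a function of the `m`-jet of `f` at `x`. So if
`Df = Q (·, f)`, the `m`-jet of `f` determines the `m`-jet of `Df`, hence the `(m + 1)`-jet of `f`,
and inductively `f x` determines all derivatives of `f` at `x`; the same equation makes `f` as
smooth as `Q` allows. A second-order system prescribing all of `D²u` in terms of `(u, Du)` is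
a first-order system of this kind for `f = (u, Du)`.
-/

section SameJetAt

variable {𝕜 : Type*} [NontriviallyNormedField 𝕜]
  {E : Type*} [NormedAddCommGroup E] [NormedSpace 𝕜 E]
  {F : Type*} [NormedAddCommGroup F] [NormedSpace 𝕜 F]
  {G : Type*} [NormedAddCommGroup G] [NormedSpace 𝕜 G]
  {m : ℕ} {f g : E → F} {x : E}

variable (𝕜) in
/-- Contact of order `m`: the functions `f` and `g` have the same `m`-jet at `x`, that is, the same
iterated Fréchet derivatives of order at most `m`. Differentiability is not part of the notion. -/
def SameJetAt (m : ℕ) (f g : E → F) (x : E) : Prop :=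
  ∀ k ≤ m, iteratedFDeriv 𝕜 k f x = iteratedFDeriv 𝕜 k g x

theorem sameJetAt_zero_iff : SameJetAt 𝕜 0 f g x ↔ f x = g x := by
  simp only [SameJetAt, Nat.le_zero, forall_eq]
  refine ⟨fun h => ?_, fun h => ?_⟩
  · simpa only [iteratedFDeriv_zero_apply] using DFunLike.congr_fun h 0
  · ext v
    simpa only [iteratedFDeriv_zero_apply] using h

namespace SameJetAt

theorem mono {n : ℕ} (h : SameJetAt 𝕜 m f g x) (hn : n ≤ m) : SameJetAt 𝕜 n f g x :=
  fun k hk => h k (hk.trans hn)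

theorem eq (h : SameJetAt 𝕜 m f g x) : f x = g x :=
  sameJetAt_zero_iff.1 (h.mono (Nat.zero_le m))

theorem refl (m : ℕ) (f : E → F) (x : E) : SameJetAt 𝕜 m f f x :=
  fun _ _ => rfl

theorem congr {f' g' : E → F} (h : SameJetAt 𝕜 m f' g' x) (hf : f =ᶠ[𝓝 x] f')
    (hg : g =ᶠ[𝓝 x] g') : SameJetAt 𝕜 m f g x := fun k hk => by
  rw [(hf.iteratedFDeriv 𝕜 k).eq_of_nhds, (hg.iteratedFDeriv 𝕜 k).eq_of_nhds, h k hk]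

theorem prodMk {f' g' : E → G} (h : SameJetAt 𝕜 m f g x) (h' : SameJetAt 𝕜 m f' g' x)
    (hf : ContDiffAt 𝕜 m f x) (hg : ContDiffAt 𝕜 m g x)
    (hf' : ContDiffAt 𝕜 m f' x) (hg' : ContDiffAt 𝕜 m g' x) :
    SameJetAt 𝕜 m (fun y => (f y, f' y)) (fun y => (g y, g' y)) x := fun k hk => by
  have hkm : (k : WithTop ℕ∞) ≤ m := mod_cast hk
  rw [iteratedFDeriv_prodMk hf hf' hkm, iteratedFDeriv_prodMk hg hg' hkm, h k hk, h' k hk]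

theorem comp {φ : F → G} (h : SameJetAt 𝕜 m f g x) (hφ : ContDiffAt 𝕜 m φ (f x))
    (hf : ContDiffAt 𝕜 m f x) (hg : ContDiffAt 𝕜 m g x) :
    SameJetAt 𝕜 m (φ ∘ f) (φ ∘ g) x := fun k hk => by
  have hkm : (k : WithTop ℕ∞) ≤ m := mod_cast hk
  rw [iteratedFDeriv_comp hφ hf hkm, iteratedFDeriv_comp (h.eq ▸ hφ) hg hkm, h.eq]
  exact Finset.sum_congr rfl fun c _ => congrArg (c.compAlongOrderedFinpartition _) <|
    funext fun i => h _ ((c.partSize_le i).trans hk)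

theorem succ_of_fderiv (h₀ : f x = g x) (h : SameJetAt 𝕜 m (fderiv 𝕜 f) (fderiv 𝕜 g) x) :
    SameJetAt 𝕜 (m + 1) f g x
  | 0, _ => sameJetAt_zero_iff.2 h₀ 0 le_rfl
  | k + 1, hk => by
    rw [iteratedFDeriv_succ_eq_comp_right, iteratedFDeriv_succ_eq_comp_right]
    exact congrArg _ (h k (Nat.le_of_succ_le_succ hk))

end SameJetAt

end SameJetAt

section TotalDifferentialSystem

variable {𝕜 : Type*} [NontriviallyNormedField 𝕜]
  {E : Type*} [NormedAddCommGroup E] [NormedSpace 𝕜 E]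
  {F : Type*} [NormedAddCommGroup F] [NormedSpace 𝕜 F] {m : ℕ} {x : E}

theorem contDiffAt_succ_of_hasFDerivAt_comp {Q : E × F → E →L[𝕜] F} {f : E → F}
    (hQ : ContDiffAt 𝕜 m Q (x, f x)) (hf : ∀ᶠ y in 𝓝 x, HasFDerivAt f (Q (y, f y)) y) :
    ContDiffAt 𝕜 (m + 1) f x := by
  have bootstrap {k : ℕ} (hQk : ContDiffAt 𝕜 k Q (x, f x)) (hfk : ContDiffAt 𝕜 k f x) :
      ContDiffAt 𝕜 (k + 1) f x :=
    contDiffAt_succ_iff_hasFDerivAt.2 ⟨fun y => Q (y, f y), eventually_iff_exists_mem.1 hf,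
      hQk.comp x (contDiffAt_id.prodMk hfk)⟩
  induction m with
  | zero =>
    have continuous_near : ContDiffAt 𝕜 0 f x := contDiffAt_zero.2
      ⟨_, hf, fun y hy => (HasFDerivAt.continuousAt hy).continuousWithinAt⟩
    exact bootstrap hQ continuous_near
  | succ k ih => exact bootstrap hQ (mod_cast ih (hQ.of_le (mod_cast k.le_succ)))

theorem sameJetAt_succ_of_hasFDerivAt_comp {Q : E × F → E →L[𝕜] F} {f g : E → F}
    (hQ : ContDiffAt 𝕜 m Q (x, f x))
    (hf : ∀ᶠ y in 𝓝 x, HasFDerivAt f (Q (y, f y)) y)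
    (hg : ∀ᶠ y in 𝓝 x, HasFDerivAt g (Q (y, g y)) y) (h : f x = g x) :
    SameJetAt 𝕜 (m + 1) f g x := by
  have raise_contact {k : ℕ} (hQk : ContDiffAt 𝕜 k Q (x, f x)) (hfg : SameJetAt 𝕜 k f g x) :
      SameJetAt 𝕜 (k + 1) f g x := by
    have hfk : ContDiffAt 𝕜 k f x :=
      (contDiffAt_succ_of_hasFDerivAt_comp hQk hf).of_le (mod_cast k.le_succ)
    have hgk : ContDiffAt 𝕜 k g x :=
      (contDiffAt_succ_of_hasFDerivAt_comp (h ▸ hQk) hg).of_le (mod_cast k.le_succ)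
    have graph_contact : SameJetAt 𝕜 k (fun y => (y, f y)) (fun y => (y, g y)) x :=
      (SameJetAt.refl k id x).prodMk hfg contDiffAt_id contDiffAt_id hfk hgk
    have rhs_contact : SameJetAt 𝕜 k (fun y => Q (y, f y)) (fun y => Q (y, g y)) x :=
      graph_contact.comp hQk (contDiffAt_id.prodMk hfk) (contDiffAt_id.prodMk hgk)
    exact .succ_of_fderiv h <| rhs_contact.congr
      (hf.mono fun _ hy => hy.fderiv) (hg.mono fun _ hy => hy.fderiv)
  induction m with
  | zero => exact raise_contact hQ (sameJetAt_zero_iff.2 h)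
  | succ k ih => exact raise_contact hQ (ih (hQ.of_le (mod_cast k.le_succ)))

theorem contDiffAt_clm_prod {G H : Type*} [NormedAddCommGroup G] [NormedSpace 𝕜 G]
    [NormedAddCommGroup H] [NormedSpace 𝕜 H] {k : WithTop ℕ∞} {A : E → F →L[𝕜] G}
    {B : E → F →L[𝕜] H} (hA : ContDiffAt 𝕜 k A x) (hB : ContDiffAt 𝕜 k B x) :
    ContDiffAt 𝕜 k (fun y => (A y).prod (B y)) x :=
  (ContinuousLinearMap.prodₗᵢ (𝕜 := 𝕜) (E := F) (F := G) (G := H) 𝕜).contDiff.comp_contDiffAt x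
    (hA.prodMk hB)

theorem differentiableAt_fderiv_of_contDiffAt_two {u : E → F} (hu : ContDiffAt 𝕜 2 u x) :
    DifferentiableAt 𝕜 (fderiv 𝕜 u) x :=
  (hu.fderiv_right (m := 1) (by norm_num)).differentiableAt one_ne_zero

theorem hasFDerivAt_prodMk_fderiv {u : E → F} (hu : ContDiffAt 𝕜 2 u x) :
    HasFDerivAt (fun y => (u y, fderiv 𝕜 u y))
      ((fderiv 𝕜 u x).prod (fderiv 𝕜 (fderiv 𝕜 u) x)) x :=
  (hu.differentiableAt two_ne_zero).hasFDerivAt.prodMk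
    (differentiableAt_fderiv_of_contDiffAt_two hu).hasFDerivAt

theorem sameJetAt_add_two_of_fderiv_fderiv_eq
    {Q : E × F × (E →L[𝕜] F) → E →L[𝕜] E →L[𝕜] F} {u v : E → F}
    (hQ : ContDiffAt 𝕜 m Q (x, u x, fderiv 𝕜 u x))
    (hu : ContDiffAt 𝕜 2 u x) (hv : ContDiffAt 𝕜 2 v x)
    (hDu : ∀ᶠ y in 𝓝 x, fderiv 𝕜 (fderiv 𝕜 u) y = Q (y, u y, fderiv 𝕜 u y))
    (hDv : ∀ᶠ y in 𝓝 x, fderiv 𝕜 (fderiv 𝕜 v) y = Q (y, v y, fderiv 𝕜 v y))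
    (h₀ : u x = v x) (h₁ : fderiv 𝕜 u x = fderiv 𝕜 v x) :
    SameJetAt 𝕜 (m + 2) u v x := by
  let R : E × F × (E →L[𝕜] F) → E →L[𝕜] F × (E →L[𝕜] F) := fun p => p.2.2.prod (Q p)
  have hR : ContDiffAt 𝕜 m R (x, u x, fderiv 𝕜 u x) :=
    contDiffAt_clm_prod contDiffAt_snd.snd hQ
  have jet_system {w : E → F} (hw : ContDiffAt 𝕜 2 w x)
      (hDw : ∀ᶠ y in 𝓝 x, fderiv 𝕜 (fderiv 𝕜 w) y = Q (y, w y, fderiv 𝕜 w y)) :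
      ∀ᶠ y in 𝓝 x, HasFDerivAt (fun z => (w z, fderiv 𝕜 w z)) (R (y, w y, fderiv 𝕜 w y)) y := by
    filter_upwards [hw.eventually (by simp), hDw] with y hwy hDwy
    simpa only [R, ← hDwy] using hasFDerivAt_prodMk_fderiv hwy
  have jet_eq : (u x, fderiv 𝕜 u x) = (v x, fderiv 𝕜 v x) := Prod.ext h₀ h₁
  have jet_contact : SameJetAt 𝕜 (m + 1) (fun z => (u z, fderiv 𝕜 u z))
      (fun z => (v z, fderiv 𝕜 v z)) x :=
    sameJetAt_succ_of_hasFDerivAt_comp hR (jet_system hu hDu) (jet_system hv hDv) jet_eq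
  exact .succ_of_fderiv h₀ <| jet_contact.comp contDiffAt_snd
    (contDiffAt_succ_of_hasFDerivAt_comp hR (jet_system hu hDu))
    (contDiffAt_succ_of_hasFDerivAt_comp (jet_eq ▸ hR) (jet_system hv hDv))

end TotalDifferentialSystem

section Coordinates

variable {n : ℕ}

theorem pd_pd_eq_fderiv_fderiv {u : (Fin n → ℝ) → ℝ} {x : Fin n → ℝ} (hu : ContDiffAt ℝ 2 u x)
    (i j : Fin n) :
    pd (fun y => pd u j y) i x = fderiv ℝ (fderiv ℝ u) x (Pi.single i 1) (Pi.single j 1) := by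
  have hDu := differentiableAt_fderiv_of_contDiffAt_two hu
  simp only [pd]
  rw [fderiv_clm_apply hDu (differentiableAt_const _)]
  simp

/-- The continuous bilinear form on `ℝⁿ` with given values at pairs of standard basis vectors, as
a continuous linear equivalence; it turns systems for all `∂ᵢ∂ⱼu` into equations for `D²u`. -/
noncomputable def bilinOfEntries (n : ℕ) :
    (Fin n → Fin n → ℝ) ≃L[ℝ] ((Fin n → ℝ) →L[ℝ] (Fin n → ℝ) →L[ℝ] ℝ) :=
  (ContinuousLinearEquiv.piCongrRight fun _ =>
    (ContinuousLinearEquiv.piRing (𝕜 := ℝ) (E := ℝ) (Fin n)).symm).trans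
    (ContinuousLinearEquiv.piRing (Fin n)).symm

theorem fderiv_fderiv_eq_bilinOfEntries {u : (Fin n → ℝ) → ℝ} {x : Fin n → ℝ}
    (hu : ContDiffAt ℝ 2 u x) :
    fderiv ℝ (fderiv ℝ u) x = bilinOfEntries n fun i j => pd (fun y => pd u j y) i x := by
  rw [← ContinuousLinearEquiv.symm_apply_eq]
  ext i j
  exact (pd_pd_eq_fderiv_fderiv hu i j).symm

theorem stmt_9_general {m : ℕ} {Φ : (Fin n → ℝ) × ℝ × (Fin n → ℝ) → Fin n → Fin n → ℝ}
    {x₀ : Fin n → ℝ} {α β : (Fin n → ℝ) → ℝ}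
    (hΦ : ContDiffAt ℝ m Φ (x₀, α x₀, fun i => pd α i x₀))
    (hα : ContDiffAt ℝ 2 α x₀) (hβ : ContDiffAt ℝ 2 β x₀)
    (heqα : ∀ᶠ x in 𝓝 x₀, ∀ i j,
      pd (fun y => pd α j y) i x = Φ (x, α x, fun k => pd α k x) i j)
    (heqβ : ∀ᶠ x in 𝓝 x₀, ∀ i j,
      pd (fun y => pd β j y) i x = Φ (x, β x, fun k => pd β k x) i j)
    (h0 : α x₀ = β x₀) (h1 : ∀ i, pd α i x₀ = pd β i x₀) :
    SameJetAt ℝ (m + 2) α β x₀ := by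
  let grad := ContinuousLinearEquiv.piRing (𝕜 := ℝ) (E := ℝ) (Fin n)
  let coords : (Fin n → ℝ) × ℝ × ((Fin n → ℝ) →L[ℝ] ℝ) → (Fin n → ℝ) × ℝ × (Fin n → ℝ) :=
    fun p => (p.1, p.2.1, grad p.2.2)
  have hcoords : ContDiff ℝ m coords := by fun_prop
  have hrhs : ContDiffAt ℝ m (bilinOfEntries n ∘ Φ ∘ coords) (x₀, α x₀, fderiv ℝ α x₀) :=
    ContDiff.comp_contDiffAt _ (by fun_prop) <|
      ContDiffAt.comp (f := coords) _ hΦ hcoords.contDiffAt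
  have hessian_eq {u : (Fin n → ℝ) → ℝ} (hu : ContDiffAt ℝ 2 u x₀)
      (hequ : ∀ᶠ x in 𝓝 x₀, ∀ i j,
        pd (fun y => pd u j y) i x = Φ (x, u x, fun k => pd u k x) i j) :
      ∀ᶠ x in 𝓝 x₀, fderiv ℝ (fderiv ℝ u) x =
        bilinOfEntries n (Φ (x, u x, fun k => pd u k x)) := by
    filter_upwards [hu.eventually (by simp), hequ] with x hux hequx
    rw [fderiv_fderiv_eq_bilinOfEntries hux]
    exact congrArg (bilinOfEntries n) (funext₂ hequx)
  exact sameJetAt_add_two_of_fderiv_fderiv_eq hrhs hα hβ (hessian_eq hα heqα) (hessian_eq hβ heqβ)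
    h0 (grad.injective (funext h1))

end Coordinates

/-- two C^∞ solutions of the flat c-system with the same 1-jet at `x₀` have all
their iterated (Fréchet) derivatives equal at `x₀`. -/
theorem stmt_9 (n : ℕ) (ω : Matrix (Fin n) (Fin n) ℝ)
    (hinv : IsUnit ω.det) (hsym : ω.IsSymm)
    (U : Set (Fin n → ℝ)) (hU : IsOpen U)
    (x₀ : Fin n → ℝ) (hx₀ : x₀ ∈ U)
    (α β : (Fin n → ℝ) → ℝ)
    (hα : ContDiffOn ℝ (⊤ : ℕ∞) α U) (hβ : ContDiffOn ℝ (⊤ : ℕ∞) β U)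
    (heqα : ∀ x ∈ U, ∀ i j : Fin n,
      pd (fun y => pd α j y) i x
        = pd α i x * pd α j x
          - (1 / 2) * (∑ k, ∑ l, ω⁻¹ k l * pd α k x * pd α l x) * ω i j)
    (heqβ : ∀ x ∈ U, ∀ i j : Fin n,
      pd (fun y => pd β j y) i x
        = pd β i x * pd β j x
          - (1 / 2) * (∑ k, ∑ l, ω⁻¹ k l * pd β k x * pd β l x) * ω i j)
    (h0 : α x₀ = β x₀) (h1 : ∀ i : Fin n, pd α i x₀ = pd β i x₀) :
    ∀ m : ℕ, iteratedFDeriv ℝ m α x₀ = iteratedFDeriv ℝ m β x₀ := by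
  have hU₀ : U ∈ 𝓝 x₀ := hU.mem_nhds hx₀
  let Φ : (Fin n → ℝ) × ℝ × (Fin n → ℝ) → Fin n → Fin n → ℝ := fun p i j =>
    p.2.2 i * p.2.2 j - (1 / 2) * (∑ k, ∑ l, ω⁻¹ k l * p.2.2 k * p.2.2 l) * ω i j
  exact fun m => stmt_9_general (m := m) (Φ := Φ) (by fun_prop)
    ((hα.contDiffAt hU₀).of_le ENat.LEInfty.out) ((hβ.contDiffAt hU₀).of_le ENat.LEInfty.out)
    (eventually_of_mem hU₀ heqα) (eventually_of_mem hU₀ heqβ) h0 h1 m (by lia)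
end

section
/- Let ω be a constant invertible symmetric n×n real matrix with inverse entries ω^{kl}, U ⊆ ℝⁿ open, ρ₀: U → ℝ and ρ: U → ℝⁿ of class C². Define on U: F_{ij} := ρ_iρ_j − ½ (Σ_{r,s} ω^{rs} ρ_r ρ_s) ω_{ij}; 𝓐_i := ∂_iρ₀ − ρ_i; 𝓑_{j,i} := ∂_jρ_i − F_{ij}; 𝓘_{i,k} := ∂_k𝓐_i − 𝓑_{i,k}; and 𝓙_{k,j,i} := ω_{ij} (Σ_{r,s} ω^{rs} ρ_r 𝓑_{k,s}) + ∂_j𝓑_{k,i} − ρ_i 𝓑_{k,j} − ρ_j 𝓑_{k,i}. Then for all indices: 𝓘_{i,k} = 𝓘_{k,i} and 𝓙_{k,j,i} = 𝓙_{j,k,i} on U. -/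
open Matrix

/-!
In the flat case the c-system reads `∂ⱼρ = Cⱼ(ρ)` for the vector fields
`Cⱼ(v) = vⱼ v - ½ |v|² ωⱼ` on `ℝⁿ`, where `|v|²` is taken with `ω⁻¹` and `ωⱼ` is the `j`-th row
of `ω`. The potential `𝓑ⱼ = ∂ⱼρ - Cⱼ(ρ)` is the defect of `ρ` in this system, and
`𝓙ₖⱼ = ∂ⱼ𝓑ₖ - DCⱼ(ρ) 𝓑ₖ` is the linearization of the `j`-th equation applied to `𝓑ₖ`. Since second
derivatives commute, all terms of `𝓙ₖⱼ - 𝓙ⱼₖ` cancel except for the Lie bracket `[Cₖ, Cⱼ](ρ)`.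
As `vⱼ = ω⁻¹(v, ωⱼ)`, the `Cⱼ` are special conformal vector fields for `ω⁻¹`, and these
commute. The symmetry of `𝓘` is that of the second derivatives of `ρ₀` and of `F`.
-/

section FlowDefect

variable {𝕜 E V : Type*} [NontriviallyNormedField 𝕜]
  [NormedAddCommGroup E] [NormedSpace 𝕜 E] [NormedAddCommGroup V] [NormedSpace 𝕜 V]

theorem differentiableAt_fderiv_apply {f : E → V} {x : E} (hf : ContDiffAt 𝕜 2 f x) (u : E) :
    DifferentiableAt 𝕜 (fun y => fderiv 𝕜 f y u) x :=
  ((hf.fderiv_right (m := 1) (by norm_num)).differentiableAt one_ne_zero).clm_apply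
    (differentiableAt_const u)

theorem fderiv_fderiv_apply_comm {f : E → V} {x : E} (hf : ContDiffAt 𝕜 (minSmoothness 𝕜 2) f x)
    (u w : E) :
    fderiv 𝕜 (fun y => fderiv 𝕜 f y u) x w = fderiv 𝕜 (fun y => fderiv 𝕜 f y w) x u := by
  have hd : DifferentiableAt 𝕜 (fderiv 𝕜 f) x :=
    ((hf.of_le le_minSmoothness).fderiv_right (m := 1) (by norm_num)).differentiableAt one_ne_zero
  have hsecond : ∀ u w, fderiv 𝕜 (fun y => fderiv 𝕜 f y u) x w = fderiv 𝕜 (fderiv 𝕜 f) x w u := by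
    intro u w
    simp [fderiv_clm_apply hd (differentiableAt_const u)]
  rw [hsecond, hsecond]
  exact (hf.isSymmSndFDerivAt le_rfl).eq w u

variable (𝕜)

/-- The defect `∂ᵤρ - f(ρ)` of a map `ρ` in the first-order equation `∂ᵤρ = f(ρ)` given by a
direction `u` and an autonomous vector field `f` on the target. -/
noncomputable def flowDefect (f : V → V) (u : E) (ρ : E → V) (x : E) : V :=
  fderiv 𝕜 ρ x u - f (ρ x)

/-- The linearization at `ρ` of the operator `ρ ↦ ∂ᵤρ - f(ρ)`, applied to a variation `β` of
`ρ`. -/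
noncomputable def linearizedFlowDefect (f : V → V) (u : E) (ρ β : E → V) (x : E) : V :=
  fderiv 𝕜 β x u - fderiv 𝕜 f (ρ x) (β x)

variable {𝕜} {f g : V → V} {ρ : E → V} {x : E}

theorem differentiableAt_flowDefect (hf : DifferentiableAt 𝕜 f (ρ x)) (hρ : ContDiffAt 𝕜 2 ρ x)
    (u : E) : DifferentiableAt 𝕜 (flowDefect 𝕜 f u ρ) x :=
  (differentiableAt_fderiv_apply hρ u).sub (hf.comp x (hρ.differentiableAt two_ne_zero))

theorem fderiv_flowDefect (hf : DifferentiableAt 𝕜 f (ρ x)) (hρ : ContDiffAt 𝕜 2 ρ x) (u w : E) :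
    fderiv 𝕜 (flowDefect 𝕜 f u ρ) x w
      = fderiv 𝕜 (fun y => fderiv 𝕜 ρ y u) x w - fderiv 𝕜 f (ρ x) (fderiv 𝕜 ρ x w) := by
  have hρd : DifferentiableAt 𝕜 ρ x := hρ.differentiableAt two_ne_zero
  change fderiv 𝕜 (fun y => fderiv 𝕜 ρ y u - (f ∘ ρ) y) x w = _
  rw [fderiv_fun_sub (differentiableAt_fderiv_apply hρ u) (hf.comp x hρd), fderiv_comp x hf hρd]
  rfl

theorem linearizedFlowDefect_flowDefect_sub_swap (hf : DifferentiableAt 𝕜 f (ρ x))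
    (hg : DifferentiableAt 𝕜 g (ρ x)) (hρ : ContDiffAt 𝕜 (minSmoothness 𝕜 2) ρ x) (u w : E) :
    linearizedFlowDefect 𝕜 g w ρ (flowDefect 𝕜 f u ρ) x
        - linearizedFlowDefect 𝕜 f u ρ (flowDefect 𝕜 g w ρ) x
      = VectorField.lieBracket 𝕜 f g (ρ x) := by
  have hρ2 : ContDiffAt 𝕜 2 ρ x := hρ.of_le le_minSmoothness
  simp only [linearizedFlowDefect, fderiv_flowDefect hf hρ2, fderiv_flowDefect hg hρ2,
    fderiv_fderiv_apply_comm hρ u w, flowDefect, map_sub, VectorField.lieBracket]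
  abel

end FlowDefect

section SpecialConformal

variable {𝕜 V : Type*} [NontriviallyNormedField 𝕜] [NormedAddCommGroup V] [NormedSpace 𝕜 V]

/-- The special conformal vector field `v ↦ B(v, a) v - ½ B(v, v) a` of a bilinear form `B` in the
direction `a`, normalized to half of the usual infinitesimal special conformal transformation. -/
noncomputable def specialConformalField (B : V →L[𝕜] V →L[𝕜] 𝕜) (a v : V) : V :=
  B v a • v - (1 / 2 * B v v) • a

variable {B : V →L[𝕜] V →L[𝕜] 𝕜}

theorem differentiable_specialConformalField (a : V) :
    Differentiable 𝕜 (specialConformalField B a) := by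
  unfold specialConformalField
  fun_prop

variable [NeZero (2 : 𝕜)]

theorem fderiv_specialConformalField (hB : ∀ u v, B u v = B v u) (a v h : V) :
    fderiv 𝕜 (specialConformalField B a) v h = B v a • h + B h a • v - B v h • a := by
  have hlin : HasFDerivAt (fun w => B w a) (B.flip a) v := (B.flip a).hasFDerivAt
  have hquad := B.hasFDerivAt_of_bilinear (hasFDerivAt_id v) (hasFDerivAt_id v)
  have hfield := (hlin.smul (hasFDerivAt_id v)).sub ((hquad.const_mul (1 / 2)).smul_const a)
  have hpolar : 1 / 2 * (B v h + B h v) = B v h := by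
    rw [hB h v]
    field_simp
    ring
  rw [← hpolar]
  exact congrArg (· h) hfield.fderiv

theorem apply_self_specialConformalField (a v : V) :
    B v (specialConformalField B a v) = 1 / 2 * B v v * B v a := by
  simp only [specialConformalField, map_sub, map_smul, smul_eq_mul]
  field_simp
  ring

theorem lieBracket_specialConformalField (hB : ∀ u v, B u v = B v u) (a b : V) :
    VectorField.lieBracket 𝕜 (specialConformalField B a) (specialConformalField B b) = 0 := by
  have hpair : ∀ a b v, B (specialConformalField B a v) b
      = B v a * B v b - 1 / 2 * B v v * B a b := by
    simp [specialConformalField]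
  ext v
  rw [VectorField.lieBracket, fderiv_specialConformalField hB, fderiv_specialConformalField hB,
    apply_self_specialConformalField, apply_self_specialConformalField, hpair, hpair, hB b a,
    specialConformalField, specialConformalField, Pi.zero_apply]
  module

end SpecialConformal

section CSystem

variable {𝕜 ι : Type*} [NontriviallyNormedField 𝕜] [CompleteSpace 𝕜] [Fintype ι] [DecidableEq ι]

/-- The bilinear form on `𝕜^ι` whose Gram matrix is the inverse of `ω` (zero when `ω` is
singular). -/
noncomputable def inverseForm (ω : Matrix ι ι 𝕜) : (ι → 𝕜) →L[𝕜] (ι → 𝕜) →L[𝕜] 𝕜 :=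
  (Matrix.toBilin' ω⁻¹).toContinuousBilinearMap

variable {ω : Matrix ι ι 𝕜}

theorem inverseForm_apply (v w : ι → 𝕜) :
    inverseForm ω v w = ∑ r, ∑ s, ω⁻¹ r s * v r * w s := by
  simp only [inverseForm, LinearMap.toContinuousBilinearMap_apply, Matrix.toBilin'_apply,
    mul_comm (v _)]

theorem inverseForm_comm (hsym : ω.IsSymm) (v w : ι → 𝕜) :
    inverseForm ω v w = inverseForm ω w v := by
  rw [inverseForm_apply, inverseForm_apply, Finset.sum_comm]
  simp only [hsym.inv.apply, mul_right_comm]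

theorem inverseForm_row (hinv : IsUnit ω.det) (hsym : ω.IsSymm) (v : ι → 𝕜) (j : ι) :
    inverseForm ω v (ω j) = v j := by
  have hrow : ω⁻¹ *ᵥ ω j = Pi.single j 1 := by
    have hcol : ω j = ω *ᵥ Pi.single j 1 := by
      ext i
      rw [Matrix.mulVec_single_one, Matrix.col_apply, hsym.apply]
    rw [hcol, Matrix.mulVec_mulVec, Matrix.nonsing_inv_mul ω hinv, Matrix.one_mulVec]
  simp [inverseForm, Matrix.toBilin'_apply', hrow]

/-- The vector field `Cⱼ(v) = vⱼ v - ½ |v|² ωⱼ` on the right-hand side of the flat c-system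
`∂ⱼρ = Cⱼ(ρ)`, encoded through `vⱼ = ω⁻¹(v, ωⱼ)` as a special conformal field. -/
noncomputable def cSystemField (ω : Matrix ι ι 𝕜) (j : ι) : (ι → 𝕜) → ι → 𝕜 :=
  specialConformalField (inverseForm ω) (ω j)

theorem differentiable_cSystemField (ω : Matrix ι ι 𝕜) (j : ι) :
    Differentiable 𝕜 (cSystemField ω j) :=
  differentiable_specialConformalField (ω j)

theorem cSystemField_apply (hinv : IsUnit ω.det) (hsym : ω.IsSymm) (j : ι) (v : ι → 𝕜) (i : ι) :
    cSystemField ω j v i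
      = v i * v j - 1 / 2 * (∑ r, ∑ s, ω⁻¹ r s * v r * v s) * ω i j := by
  rw [cSystemField, specialConformalField, inverseForm_row hinv hsym, inverseForm_apply,
    ← hsym.apply i j, mul_comm (v i)]
  rfl

theorem cSystemField_apply_comm (hinv : IsUnit ω.det) (hsym : ω.IsSymm) (i j : ι) (v : ι → 𝕜) :
    cSystemField ω j v i = cSystemField ω i v j := by
  rw [cSystemField_apply hinv hsym, cSystemField_apply hinv hsym, hsym.apply, mul_comm (v i)]

theorem lieBracket_cSystemField [NeZero (2 : 𝕜)] (hsym : ω.IsSymm) (j k : ι) :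
    VectorField.lieBracket 𝕜 (cSystemField ω j) (cSystemField ω k) = 0 :=
  lieBracket_specialConformalField (inverseForm_comm hsym) _ _

end CSystem

section PartialDerivative

variable {n : ℕ}

theorem pd_pd_comm {f : (Fin n → ℝ) → ℝ} {x : Fin n → ℝ} (hf : ContDiffAt ℝ 2 f x) (i j : Fin n) :
    pd (pd f i) j x = pd (pd f j) i x :=
  fderiv_fderiv_apply_comm (by simpa using hf) _ _

theorem pd_component {φ : (Fin n → ℝ) → Fin n → ℝ} {x : Fin n → ℝ} (hφ : DifferentiableAt ℝ φ x)
    (i j : Fin n) : pd (fun y => φ y i) j x = fderiv ℝ φ x (Pi.single j 1) i := by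
  rw [pd, fderiv_apply hφ]
  rfl

theorem pd_sub {f g : (Fin n → ℝ) → ℝ} {x : Fin n → ℝ} (hf : DifferentiableAt ℝ f x)
    (hg : DifferentiableAt ℝ g x) (i : Fin n) :
    pd (fun y => f y - g y) i x = pd f i x - pd g i x := by
  simp [pd, fderiv_fun_sub hf hg]

theorem pd_congr {f g : (Fin n → ℝ) → ℝ} {x : Fin n → ℝ} (h : f =ᶠ[nhds x] g) (i : Fin n) :
    pd f i x = pd g i x := by
  rw [pd, h.fderiv_eq, pd]

end PartialDerivative

section GaugeStrength

variable {n : ℕ} {ω : Matrix (Fin n) (Fin n) ℝ} {ρ : (Fin n → ℝ) → Fin n → ℝ} {x : Fin n → ℝ}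

/-- The gauge potential `𝓑ₖ = ∂ₖρ - Cₖ(ρ)` of the c-system, as a vector-valued map. -/
noncomputable def gaugePotential (ω : Matrix (Fin n) (Fin n) ℝ) (ρ : (Fin n → ℝ) → Fin n → ℝ)
    (k : Fin n) : (Fin n → ℝ) → Fin n → ℝ :=
  flowDefect ℝ (cSystemField ω k) (Pi.single k 1) ρ

/-- The gauge strength `𝓙ₖⱼ = ∂ⱼ𝓑ₖ - DCⱼ(ρ) 𝓑ₖ` of the c-system, as a vector-valued map. -/
noncomputable def gaugeStrength (ω : Matrix (Fin n) (Fin n) ℝ) (ρ : (Fin n → ℝ) → Fin n → ℝ)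
    (k j : Fin n) : (Fin n → ℝ) → Fin n → ℝ :=
  linearizedFlowDefect ℝ (cSystemField ω j) (Pi.single j 1) ρ (gaugePotential ω ρ k)

theorem gaugePotential_apply (hρ : DifferentiableAt ℝ ρ x) (k i : Fin n) :
    gaugePotential ω ρ k x i = pd (fun y => ρ y i) k x - cSystemField ω k (ρ x) i := by
  rw [pd_component hρ, gaugePotential, flowDefect, Pi.sub_apply]

theorem gaugeStrength_apply (hinv : IsUnit ω.det) (hsym : ω.IsSymm) (hρ : ContDiffAt ℝ 2 ρ x)
    (k j i : Fin n) :
    gaugeStrength ω ρ k j x i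
      = ω i j * (∑ r, ∑ s, ω⁻¹ r s * ρ x r * gaugePotential ω ρ k x s)
        + pd (fun y => gaugePotential ω ρ k y i) j x
        - ρ x i * gaugePotential ω ρ k x j - ρ x j * gaugePotential ω ρ k x i := by
  have hB : DifferentiableAt ℝ (gaugePotential ω ρ k) x :=
    differentiableAt_flowDefect (differentiable_cSystemField ω k _) hρ _
  rw [gaugeStrength, linearizedFlowDefect, cSystemField,
    fderiv_specialConformalField (inverseForm_comm hsym), inverseForm_row hinv hsym,
    inverseForm_row hinv hsym, inverseForm_apply, pd_component hB, ← hsym.apply i j]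
  simp only [Pi.sub_apply, Pi.add_apply, Pi.smul_apply, smul_eq_mul]
  ring

theorem gaugeStrength_comm (hsym : ω.IsSymm) (hρ : ContDiffAt ℝ 2 ρ x) (j k : Fin n) :
    gaugeStrength ω ρ k j x = gaugeStrength ω ρ j k x := by
  rw [← sub_eq_zero]
  simp only [gaugeStrength, gaugePotential]
  rw [linearizedFlowDefect_flowDefect_sub_swap (differentiable_cSystemField ω k _)
    (differentiable_cSystemField ω j _) (by simpa using hρ), lieBracket_cSystemField hsym,
    Pi.zero_apply]

end GaugeStrength

/-- the symmetries `𝓘_{i,k} = 𝓘_{k,i}` and `𝓙_{k,j,i} = 𝓙_{j,k,i}` of the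
gauge strength fields built from the flat c-system data (the complex property
`D_{2,c} ∘ D_{1,c} = 0`). -/
theorem stmt_14 (n : ℕ) (ω : Matrix (Fin n) (Fin n) ℝ)
    (hinv : IsUnit ω.det) (hsym : ω.IsSymm)
    (U : Set (Fin n → ℝ)) (hU : IsOpen U)
    (ρ₀ : (Fin n → ℝ) → ℝ) (hρ₀ : ContDiffOn ℝ 2 ρ₀ U)
    (ρ : (Fin n → ℝ) → (Fin n → ℝ)) (hρ : ContDiffOn ℝ 2 ρ U)
    (F : Fin n → Fin n → (Fin n → ℝ) → ℝ)
    (hF : ∀ i j x, F i j x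
      = ρ x i * ρ x j - (1 / 2) * (∑ r, ∑ s, ω⁻¹ r s * ρ x r * ρ x s) * ω i j)
    (𝓐 : Fin n → (Fin n → ℝ) → ℝ)
    (h𝓐 : ∀ i x, 𝓐 i x = pd ρ₀ i x - ρ x i)
    (𝓑 : Fin n → Fin n → (Fin n → ℝ) → ℝ)
    (h𝓑 : ∀ j i x, 𝓑 j i x = pd (fun y => ρ y i) j x - F i j x)
    (𝓘 : Fin n → Fin n → (Fin n → ℝ) → ℝ)
    (h𝓘 : ∀ i k x, 𝓘 i k x = pd (𝓐 i) k x - 𝓑 i k x)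
    (𝓙 : Fin n → Fin n → Fin n → (Fin n → ℝ) → ℝ)
    (h𝓙 : ∀ k j i x, 𝓙 k j i x
      = ω i j * (∑ r, ∑ s, ω⁻¹ r s * ρ x r * 𝓑 k s x)
        + pd (𝓑 k i) j x - ρ x i * 𝓑 k j x - ρ x j * 𝓑 k i x) :
    (∀ x ∈ U, ∀ i k : Fin n, 𝓘 i k x = 𝓘 k i x) ∧
    (∀ x ∈ U, ∀ i j k : Fin n, 𝓙 k j i x = 𝓙 j k i x) := by
  have hFC : ∀ i j x, F i j x = cSystemField ω j (ρ x) i := fun i j x => by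
    rw [hF, cSystemField_apply hinv hsym]
  have hρx : ∀ x ∈ U, ContDiffAt ℝ 2 ρ x := fun x hx => hρ.contDiffAt (hU.mem_nhds hx)
  have hρd : ∀ x ∈ U, DifferentiableAt ℝ ρ x := fun x hx => (hρx x hx).differentiableAt two_ne_zero
  refine ⟨fun x hx i k => ?_, fun x hx i j k => ?_⟩
  · have hρ₀x : ContDiffAt ℝ 2 ρ₀ x := hρ₀.contDiffAt (hU.mem_nhds hx)
    have hpd𝓐 : ∀ i k, pd (𝓐 i) k x = pd (pd ρ₀ i) k x - pd (fun y => ρ y i) k x := fun i k => by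
      rw [funext (h𝓐 i)]
      exact pd_sub (differentiableAt_fderiv_apply hρ₀x _) (differentiableAt_pi.1 (hρd x hx) i) k
    rw [h𝓘, h𝓘, hpd𝓐, hpd𝓐, h𝓑, h𝓑, pd_pd_comm hρ₀x i k, hFC, hFC,
      cSystemField_apply_comm hinv hsym]
    ring
  · have h𝓑ρ : ∀ k i, ∀ y ∈ U, 𝓑 k i y = gaugePotential ω ρ k y i := fun k i y hy => by
      rw [h𝓑, hFC, gaugePotential_apply (hρd y hy)]
    have hpd𝓑 : ∀ k j, pd (𝓑 k i) j x = pd (fun y => gaugePotential ω ρ k y i) j x := fun k j =>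
      pd_congr (Filter.eventually_of_mem (hU.mem_nhds hx) (h𝓑ρ k i)) j
    have h𝓙ρ : ∀ k j, 𝓙 k j i x = gaugeStrength ω ρ k j x i := fun k j => by
      simp only [h𝓙, h𝓑ρ _ _ x hx, hpd𝓑, gaugeStrength_apply hinv hsym (hρx x hx)]
    rw [h𝓙ρ, h𝓙ρ, gaugeStrength_comm hsym (hρx x hx)]
end
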